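/- The sextic curve 64b(1+16b^2) y^3 + ((768b^2+16)x^2 - 768x b^2 + 288b^2) y^2 + (264x^2 b - 108b^3 + 192x^4 b - 72xb - 384x^3 b) y + (48x^4 - 27b^2 + 54xb^2 - 16x^3 - 27x^2 b^2 - 48x^5 + 16x^6) = 0 with b = 1/2 locally defines smooth solutions y(x) of the ODE E[y] = 0 wherever the implicit function theorem applies. -/

import Mathlib

noncomputable def Eode (y : ℝ → ℝ) (s : Set ℝ) (x : ℝ) : ℝ :=
  10 * (iteratedDerivWithin 3 y s x) ^ 3 * iteratedDerivWithin 7 y s x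
  - 70 * (iteratedDerivWithin 3 y s x) ^ 2 * iteratedDerivWithin 4 y s x *
      iteratedDerivWithin 6 y s x
  - 49 * (iteratedDerivWithin 3 y s x) ^ 2 * (iteratedDerivWithin 5 y s x) ^ 2
  + 280 * iteratedDerivWithin 3 y s x * (iteratedDerivWithin 4 y s x) ^ 2 *
      iteratedDerivWithin 5 y s x
  - 175 * (iteratedDerivWithin 4 y s x) ^ 4

/-- The sextic curve (with parameter b). -/
def Fsextic (b x y : ℝ) : ℝ :=
  (64 * b + 1024 * b ^ 3) * y ^ 3
  + ((768 * b ^ 2 + 16) * x ^ 2 - 768 * x * b ^ 2 + 288 * b ^ 2) * y ^ 2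
  + (264 * x ^ 2 * b - 108 * b ^ 3 + 192 * x ^ 4 * b - 72 * x * b - 384 * x ^ 3 * b) * y
  + (48 * x ^ 4 - 27 * b ^ 2 + 54 * x * b ^ 2 - 16 * x ^ 3 - 27 * x ^ 2 * b ^ 2
      - 48 * x ^ 5 + 16 * x ^ 6)

/-!
The sextic is a rational curve: with `q = 3t - t³` it is parametrized so that
`x = (1 + bq) / (1 + t²)` and `y' = -q / (2(1 + t²))`. Hence `x = A / B` and `y' = P / B`, where the
binary cubics `A` and `P` are both apolar to `B`; the curve lifts to a Legendrian twisted cubic.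
Let `W` be the Wronskian of `B` and `A`, a quartic with `dt/dx = B² / W`. By apolarity the quadratic
invariant of `W` vanishes, and so does the second transvectant of `B` and `W`, while `y'''` is a
constant multiple of `B⁴ / W³`. Consequently the remaining covariants of `B` and `W`, made functions
of `x`, satisfy a closed differential system, along which the equation `E[y] = 0` is an identity.

On the sextic `t` is a rational function of `x` and `y` whose denominator vanishes over only
finitely many `x`, and there `E[y] = 0` by continuity.
-/

open Polynomial

section IteratedDeriv

variable {𝕜 F : Type*} [NontriviallyNormedField 𝕜] [NormedAddCommGroup F] [NormedSpace 𝕜 F]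

lemma eqOn_iteratedDerivWithin_succ {s : Set 𝕜} (hs : IsOpen s) {n : ℕ} {f g g' : 𝕜 → F}
    (hfg : s.EqOn (iteratedDerivWithin n f s) g) (hg : ∀ x ∈ s, HasDerivAt g (g' x) x) :
    s.EqOn (iteratedDerivWithin (n + 1) f s) g' := fun x hx ↦ by
  rw [iteratedDerivWithin_succ, derivWithin_congr hfg (hfg hx), derivWithin_of_isOpen hs hx]
  exact (hg x hx).deriv

end IteratedDeriv

section Eode

variable {s : Set ℝ} {y : ℝ → ℝ}

lemma Eode_eq_of_isOpen {U : Set ℝ} (hs : IsOpen s) (hU : IsOpen U) {x : ℝ} (hxs : x ∈ s)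
    (hxU : x ∈ U) : Eode y s x = Eode y U x := by
  simp only [Eode, iteratedDerivWithin_of_isOpen hs hxs, iteratedDerivWithin_of_isOpen hU hxU]

lemma continuousOn_Eode (hs : IsOpen s) (hy : ContDiffOn ℝ 7 y s) : ContinuousOn (Eode y s) s := by
  have continuousOn_deriv (k : ℕ) (hk : k ≤ 7) : ContinuousOn (iteratedDerivWithin k y s) s :=
    hy.continuousOn_iteratedDerivWithin (by exact_mod_cast hk) hs.uniqueDiffOn
  have h₃ := continuousOn_deriv 3 (by norm_num)
  have h₄ := continuousOn_deriv 4 (by norm_num)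
  have h₅ := continuousOn_deriv 5 (by norm_num)
  have h₆ := continuousOn_deriv 6 (by norm_num)
  have h₇ := continuousOn_deriv 7 le_rfl
  unfold Eode
  fun_prop

lemma Eode_eq_zero_of_finite_diff (hs : IsOpen s) (hy : ContDiffOn ℝ 7 y s) {S : Set ℝ}
    (hS : S.Finite) (h : ∀ x ∈ s \ S, Eode y s x = 0) : ∀ x ∈ s, Eode y s x = 0 :=
  Set.EqOn.of_subset_closure (g := 0) h (continuousOn_Eode hs hy) continuousOn_const
    Set.sdiff_subset ((hS.countable.dense_compl ℝ).open_subset_closure_inter hs)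

/-- Every term of the differential polynomial `Eode` is `(y''')⁴` times a polynomial in `m`, `h`
and `θ`, and these polynomials cancel. -/
theorem Eode_eq_zero_of_closed_system (hs : IsOpen s) {u m h θ : ℝ → ℝ}
    (hy : s.EqOn (iteratedDerivWithin 3 y s) u)
    (hu : ∀ x ∈ s, HasDerivAt u (-(u x * m x)) x)
    (hm : ∀ x ∈ s, HasDerivAt m ((5 * h x - m x ^ 2) / 4) x)
    (hh : ∀ x ∈ s, HasDerivAt h (θ x - h x * m x) x)
    (hθ : ∀ x ∈ s, HasDerivAt θ (-(3 * θ x * m x + h x ^ 2) / 2) x) :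
    ∀ x ∈ s, Eode y s x = 0 := by
  have hy₄ : s.EqOn (iteratedDerivWithin 4 y s) (fun x ↦ -(u x * m x)) :=
    eqOn_iteratedDerivWithin_succ hs hy hu
  have hy₅ : s.EqOn (iteratedDerivWithin 5 y s) (fun x ↦ 5 / 4 * u x * (m x ^ 2 - h x)) := by
    refine eqOn_iteratedDerivWithin_succ hs hy₄ fun x hx ↦ ?_
    refine ((hu x hx).mul (hm x hx)).neg.congr_deriv ?_
    ring
  have hy₆ : s.EqOn (iteratedDerivWithin 6 y s)
      (fun x ↦ 5 / 8 * u x * (-3 * m x ^ 3 + 9 * (h x * m x) - 2 * θ x)) := by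
    refine eqOn_iteratedDerivWithin_succ hs hy₅ fun x hx ↦ ?_
    refine (((hu x hx).const_mul (5 / 4)).mul (((hm x hx).pow 2).sub (hh x hx))).congr_deriv ?_
    simp only [Pi.sub_apply, Pi.pow_apply]
    ring
  have hy₇ : s.EqOn (iteratedDerivWithin 7 y s)
      (fun x ↦ 35 / 32 * u x *
        (3 * m x ^ 4 - 18 * h x * m x ^ 2 + 8 * θ x * m x + 7 * h x ^ 2)) := by
    refine eqOn_iteratedDerivWithin_succ hs hy₆ fun x hx ↦ ?_
    refine (((hu x hx).const_mul (5 / 8)).mul ((((hm x hx).pow 3).const_mul (-3)).add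
      (((hh x hx).mul (hm x hx)).const_mul 9) |>.sub ((hθ x hx).const_mul 2))).congr_deriv ?_
    simp only [Pi.sub_apply, Pi.add_apply, Pi.mul_apply, Pi.pow_apply]
    ring
  intro x hx
  rw [Eode, hy hx, hy₄ hx, hy₅ hx, hy₆ hx, hy₇ hx]
  ring

end Eode

section Transvectants

variable {R : Type*} [CommRing R]

/-- The third transvectant, up to a scalar, of two binary cubics written in an affine coordinate.
On polynomials of degree at most three it is a constant polynomial, whose value is the invariant
symplectic form. -/
noncomputable def apolarPairing (A B : R[X]) : R[X] :=
  derivative^[3] A * B - derivative^[2] A * derivative B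
    + derivative A * derivative^[2] B - A * derivative^[3] B

/-- The Hessian, up to a scalar, of a binary quartic written in an affine coordinate. -/
noncomputable def quarticHessian (W : R[X]) : R[X] :=
  4 * W * derivative^[2] W - 3 * derivative W ^ 2

/-- The quadratic invariant, up to a scalar, of a binary quartic written in an affine coordinate. It
vanishes when the roots of the quartic are equianharmonic. -/
noncomputable def quarticInvariant (W : R[X]) : R[X] :=
  2 * W * derivative^[4] W - 2 * derivative W * derivative^[3] W + derivative^[2] W ^ 2

/-- The first transvectant of a binary cubic `B` and a binary quartic `W` written in an affine
coordinate; the weights three and four are the degrees. -/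
noncomputable def cubicQuarticJacobian (B W : R[X]) : R[X] :=
  3 * derivative W * B - 4 * W * derivative B

/-- The second transvectant, up to a scalar, of a binary cubic `B` and a binary quartic `W` written
in an affine coordinate. -/
noncomputable def cubicQuarticTransvectant (B W : R[X]) : R[X] :=
  derivative^[2] W * B - 2 * derivative W * derivative B + 2 * W * derivative^[2] B

lemma derivative_apolarPairing {A B : R[X]} (hA : A.natDegree ≤ 3) (hB : B.natDegree ≤ 3) :
    derivative (apolarPairing A B) = 0 := by
  have hA₄ : derivative^[4] A = 0 := iterate_derivative_eq_zero (by lia)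
  have hB₄ : derivative^[4] B = 0 := iterate_derivative_eq_zero (by lia)
  simp only [Function.iterate_succ_apply', Function.iterate_zero_apply] at hA₄ hB₄
  simp only [apolarPairing, Function.iterate_succ_apply', Function.iterate_zero_apply,
    derivative_add, derivative_sub, derivative_mul, hA₄, hB₄]
  ring

lemma cubicQuarticTransvectant_wronskian (A B : R[X]) :
    cubicQuarticTransvectant B (wronskian B A) = B * apolarPairing A B := by
  simp only [cubicQuarticTransvectant, apolarPairing, wronskian, Function.iterate_succ_apply',
    Function.iterate_zero_apply, derivative_add, derivative_sub, derivative_mul]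
  ring

/-- This is the Plücker relation for the `2 × 2` minors of the third-order jets of `A` and `B`. -/
lemma quarticInvariant_wronskian {A B : R[X]} (hA : A.natDegree ≤ 3) (hB : B.natDegree ≤ 3) :
    quarticInvariant (wronskian B A) = apolarPairing A B ^ 2 := by
  have hA₄ : derivative^[4] A = 0 := iterate_derivative_eq_zero (by lia)
  have hB₄ : derivative^[4] B = 0 := iterate_derivative_eq_zero (by lia)
  simp only [Function.iterate_succ_apply', Function.iterate_zero_apply] at hA₄ hB₄
  simp only [quarticInvariant, apolarPairing, wronskian, Function.iterate_succ_apply',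
    Function.iterate_zero_apply, derivative_add, derivative_sub, derivative_mul, hA₄, hB₄,
    derivative_zero]
  ring

lemma wronskian_wronskian_wronskian (A B P : R[X]) :
    wronskian (wronskian B A) (wronskian B P) =
      B * (B * apolarPairing A P + A * apolarPairing P B - P * apolarPairing A B) := by
  simp only [apolarPairing, wronskian, Function.iterate_succ_apply', Function.iterate_zero_apply,
    derivative_sub, derivative_mul]
  ring

lemma derivative_wronskian_quarticHessian (W : R[X]) :
    2 * W * derivative (wronskian W (quarticHessian W)) =
      3 * derivative W * wronskian W (quarticHessian W) - quarticHessian W ^ 2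
        + 4 * W ^ 2 * quarticInvariant W := by
  simp only [quarticHessian, quarticInvariant, wronskian, Function.iterate_succ_apply',
    Function.iterate_zero_apply, derivative_add, derivative_sub, derivative_mul,
    derivative_ofNat, derivative_zero, sq]
  ring

/-- The polynomial `q` with `D (p Bⁱ / Wʲ) = q Bⁱ⁺¹ / Wʲ⁺²` for the derivation `D = (B² / W) d/dt`,
which is `d/dx` when `x = A / B` and `W` is the Wronskian of `B` and `A`. -/
noncomputable def derivNumerator (B W : R[X]) (i j : ℕ) (p : R[X]) : R[X] :=
  derivative p * B * W + i * p * derivative B * W - j * p * B * derivative W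

lemma derivNumerator_C (B W : R[X]) (k : R) :
    derivNumerator B W 4 3 (C k) = -(C k * cubicQuarticJacobian B W) := by
  simp only [derivNumerator, cubicQuarticJacobian, derivative_C]
  push_cast
  ring

lemma derivNumerator_zero_one (B W p : R[X]) : derivNumerator B W 0 1 p = B * wronskian W p := by
  simp only [derivNumerator, wronskian]
  push_cast
  ring

lemma four_mul_derivNumerator_cubicQuarticJacobian (B W : R[X]) :
    4 * derivNumerator B W 1 2 (cubicQuarticJacobian B W) =
      5 * quarticHessian W * B ^ 2 - cubicQuarticJacobian B W ^ 2
        - 8 * B * W * cubicQuarticTransvectant B W := by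
  simp only [derivNumerator, cubicQuarticJacobian, quarticHessian, cubicQuarticTransvectant,
    Function.iterate_succ_apply', Function.iterate_zero_apply, derivative_sub, derivative_mul,
    derivative_ofNat]
  push_cast
  ring

lemma derivNumerator_quarticHessian (B W : R[X]) :
    derivNumerator B W 4 4 (quarticHessian W) =
      B * wronskian W (quarticHessian W) - quarticHessian W * cubicQuarticJacobian B W := by
  simp only [derivNumerator, cubicQuarticJacobian, wronskian]
  push_cast
  ring

lemma two_mul_derivNumerator_wronskian_quarticHessian (B W : R[X]) :
    2 * derivNumerator B W 6 6 (wronskian W (quarticHessian W)) =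
      -(3 * wronskian W (quarticHessian W) * cubicQuarticJacobian B W + B * quarticHessian W ^ 2)
        + 4 * B * W ^ 2 * quarticInvariant W := by
  simp only [derivNumerator, cubicQuarticJacobian]
  push_cast
  linear_combination B * derivative_wronskian_quarticHessian W

end Transvectants

section RationalParameter

variable {A B P W : ℝ[X]} {t y : ℝ → ℝ} {s : Set ℝ} {x : ℝ}

lemma hasDerivAt_eval_div_eval_pow (p : ℝ[X]) (n : ℕ) {t' : ℝ} (hB : B.eval (t x) ≠ 0)
    (ht : HasDerivAt t t' x) :
    HasDerivAt (fun z ↦ p.eval (t z) / B.eval (t z) ^ n)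
      ((derivative p * B - n * p * derivative B).eval (t x) / B.eval (t x) ^ (n + 1) * t') x := by
  refine (((p.hasDerivAt (t x)).comp x ht).div (((B.hasDerivAt (t x)).comp x ht).pow n)
    (pow_ne_zero n hB)).congr_deriv ?_
  simp only [Pi.pow_apply, Function.comp_apply, eval_sub, eval_mul, eval_natCast]
  rcases n with _ | n <;> simp only [Nat.cast_zero, Nat.add_sub_cancel] <;> field_simp <;> ring

lemma hasDerivAt_eval_div_eval (p : ℝ[X]) {w : ℝ} (hB : B.eval (t x) ≠ 0)
    (ht : HasDerivAt t (B.eval (t x) ^ 2 / w) x) :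
    HasDerivAt (fun z ↦ p.eval (t z) / B.eval (t z)) ((wronskian B p).eval (t x) / w) x := by
  have h := hasDerivAt_eval_div_eval_pow p 1 hB ht
  simp only [pow_one] at h
  refine h.congr_deriv ?_
  simp only [wronskian, eval_sub, eval_mul, Nat.cast_one, one_mul]
  field_simp
  ring

lemma hasDerivAt_eval_mul_pow_div_pow (p : ℝ[X]) (i j : ℕ) (hW : W.eval (t x) ≠ 0)
    (ht : HasDerivAt t (B.eval (t x) ^ 2 / W.eval (t x)) x) :
    HasDerivAt (fun z ↦ p.eval (t z) * B.eval (t z) ^ i / W.eval (t z) ^ j)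
      ((derivNumerator B W i j p).eval (t x) * B.eval (t x) ^ (i + 1) / W.eval (t x) ^ (j + 2))
      x := by
  have h := hasDerivAt_eval_div_eval_pow (p * B ^ i) j hW ht
  simp only [eval_mul, eval_pow] at h
  refine h.congr_deriv ?_
  rcases i with _ | i <;>
    simp only [derivNumerator, derivative_mul, derivative_pow, eval_add, eval_sub, eval_mul,
      eval_pow, eval_natCast, eval_C, eval_zero, Nat.cast_zero, Nat.add_sub_cancel] <;>
    field_simp <;> ring

/-- With `H` the Hessian of `W`, the functions `m = (B, W)₁ B / W²`, `h = H B⁴ / W⁴` and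
`θ = (W, H)₁ B⁶ / W⁶` of `t` form a closed system because the covariants in `hBW` and `hW`
vanish. -/
theorem Eode_eq_zero_of_iteratedDerivWithin_three (hs : IsOpen s) (k : ℝ)
    (hBW : cubicQuarticTransvectant B W = 0) (hW : quarticInvariant W = 0)
    (hW₀ : ∀ x ∈ s, W.eval (t x) ≠ 0)
    (ht : ∀ x ∈ s, HasDerivAt t (B.eval (t x) ^ 2 / W.eval (t x)) x)
    (hy : s.EqOn (iteratedDerivWithin 3 y s)
      (fun x ↦ k * B.eval (t x) ^ 4 / W.eval (t x) ^ 3)) :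
    ∀ x ∈ s, Eode y s x = 0 := by
  have hM := four_mul_derivNumerator_cubicQuarticJacobian B W
  have hT := two_mul_derivNumerator_wronskian_quarticHessian B W
  rw [hBW, mul_zero, sub_zero] at hM
  rw [hW, mul_zero, add_zero] at hT
  have hasDerivAt_frame (p : ℝ[X]) (i j : ℕ) (x : ℝ) (hx : x ∈ s) :=
    hasDerivAt_eval_mul_pow_div_pow p i j (hW₀ x hx) (ht x hx)
  refine Eode_eq_zero_of_closed_system hs
    (u := fun x ↦ (C k).eval (t x) * B.eval (t x) ^ 4 / W.eval (t x) ^ 3)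
    (m := fun x ↦ (cubicQuarticJacobian B W).eval (t x) * B.eval (t x) ^ 1 / W.eval (t x) ^ 2)
    (h := fun x ↦ (quarticHessian W).eval (t x) * B.eval (t x) ^ 4 / W.eval (t x) ^ 4)
    (θ := fun x ↦ (wronskian W (quarticHessian W)).eval (t x) * B.eval (t x) ^ 6
      / W.eval (t x) ^ 6)
    (by simpa only [eval_C] using hy)
    (fun x hx ↦ (hasDerivAt_frame _ _ _ x hx).congr_deriv ?_)
    (fun x hx ↦ (hasDerivAt_frame _ _ _ x hx).congr_deriv ?_)
    (fun x hx ↦ (hasDerivAt_frame _ _ _ x hx).congr_deriv ?_)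
    (fun x hx ↦ (hasDerivAt_frame _ _ _ x hx).congr_deriv ?_)
  · rw [derivNumerator_C, eval_neg, eval_mul]
    ring
  · have hMx := congrArg (eval (t x)) hM
    simp only [eval_mul, eval_sub, eval_pow, eval_ofNat] at hMx
    linear_combination B.eval (t x) ^ 2 / W.eval (t x) ^ 4 / 4 * hMx
  · rw [derivNumerator_quarticHessian, eval_sub, eval_mul, eval_mul]
    ring
  · have hTx := congrArg (eval (t x)) hT
    simp only [eval_mul, eval_add, eval_neg, eval_pow, eval_ofNat] at hTx
    linear_combination B.eval (t x) ^ 7 / W.eval (t x) ^ 8 / 2 * hTx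

lemma eval_wronskian_ne_zero_and_hasDerivAt (hs : IsOpen s) (ht : DifferentiableOn ℝ t s)
    (hB : ∀ x ∈ s, B.eval (t x) ≠ 0) (hAB : ∀ x ∈ s, x * B.eval (t x) = A.eval (t x))
    (hx : x ∈ s) :
    (wronskian B A).eval (t x) ≠ 0 ∧
      HasDerivAt t (B.eval (t x) ^ 2 / (wronskian B A).eval (t x)) x := by
  have htx : HasDerivAt t (deriv t x) x := (ht.differentiableAt (hs.mem_nhds hx)).hasDerivAt
  have hleft := (hasDerivAt_id x).mul ((B.hasDerivAt (t x)).comp x htx)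
  have hright := (A.hasDerivAt (t x)).comp x htx
  have hderiv : 1 * B.eval (t x) + x * ((derivative B).eval (t x) * deriv t x) =
      (derivative A).eval (t x) * deriv t x :=
    (hleft.congr_of_eventuallyEq
      ((Filter.eventually_of_mem (hs.mem_nhds hx) fun z hz ↦ (hAB z hz).symm))).unique hright
  have hW : (wronskian B A).eval (t x) * deriv t x = B.eval (t x) ^ 2 := by
    simp only [wronskian, eval_sub, eval_mul]
    linear_combination
      (derivative B).eval (t x) * deriv t x * hAB x hx - B.eval (t x) * hderiv
  have hW₀ : (wronskian B A).eval (t x) ≠ 0 :=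
    left_ne_zero_of_mul (hW ▸ pow_ne_zero 2 (hB x hx))
  exact ⟨hW₀, htx.congr_deriv (by rw [← hW, mul_div_cancel_left₀ _ hW₀])⟩

/-- The three cubics are three of the four coordinates of a Legendrian twisted cubic in the contact
manifold `ℙ³`, in the chart with contact form `dy - y' dx`. -/
theorem Eode_eq_zero_of_legendrian (hA : A.natDegree ≤ 3) (hB : B.natDegree ≤ 3)
    (hP : P.natDegree ≤ 3) (hAB : apolarPairing A B = 0) (hPB : apolarPairing P B = 0)
    (hs : IsOpen s) (ht : DifferentiableOn ℝ t s) (hB₀ : ∀ x ∈ s, B.eval (t x) ≠ 0)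
    (hx : ∀ x ∈ s, x * B.eval (t x) = A.eval (t x))
    (hy : ∀ x ∈ s, HasDerivAt y (P.eval (t x) / B.eval (t x)) x) :
    ∀ x ∈ s, Eode y s x = 0 := by
  have hW₀ (x : ℝ) (hxs : x ∈ s) : (wronskian B A).eval (t x) ≠ 0 :=
    (eval_wronskian_ne_zero_and_hasDerivAt hs ht hB₀ hx hxs).1
  have ht' (x : ℝ) (hxs : x ∈ s) :
      HasDerivAt t (B.eval (t x) ^ 2 / (wronskian B A).eval (t x)) x :=
    (eval_wronskian_ne_zero_and_hasDerivAt hs ht hB₀ hx hxs).2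
  obtain ⟨k, hk⟩ : ∃ k, apolarPairing A P = C k :=
    ⟨_, eq_C_of_derivative_eq_zero (derivative_apolarPairing hA hP)⟩
  have hy₁ : s.EqOn (iteratedDerivWithin 1 y s) (fun x ↦ P.eval (t x) / B.eval (t x)) :=
    eqOn_iteratedDerivWithin_succ hs (fun x _ ↦ by rw [iteratedDerivWithin_zero]) hy
  have hy₂ : s.EqOn (iteratedDerivWithin 2 y s)
      (fun x ↦ (wronskian B P).eval (t x) / (wronskian B A).eval (t x)) := by
    refine eqOn_iteratedDerivWithin_succ hs hy₁ fun x hxs ↦ ?_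
    exact hasDerivAt_eval_div_eval P (hB₀ x hxs) (ht' x hxs)
  have hV : wronskian (wronskian B A) (wronskian B P) = C k * B ^ 2 := by
    rw [wronskian_wronskian_wronskian, hAB, hPB, hk]
    ring
  have hy₃ : s.EqOn (iteratedDerivWithin 3 y s)
      (fun x ↦ k * B.eval (t x) ^ 4 / (wronskian B A).eval (t x) ^ 3) := by
    refine eqOn_iteratedDerivWithin_succ hs (g := fun x ↦ (wronskian B P).eval (t x)
      * B.eval (t x) ^ 0 / (wronskian B A).eval (t x) ^ 1) (by simpa using hy₂) fun x hxs ↦ ?_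
    refine (hasDerivAt_eval_mul_pow_div_pow _ 0 1 (hW₀ x hxs) (ht' x hxs)).congr_deriv ?_
    rw [derivNumerator_zero_one, hV, eval_mul, eval_mul, eval_pow, eval_C]
    ring
  exact Eode_eq_zero_of_iteratedDerivWithin_three hs k
    (by rw [cubicQuarticTransvectant_wronskian, hAB, mul_zero])
    (by rw [quarticInvariant_wronskian hA hB, hAB, zero_pow two_ne_zero]) hW₀ ht' hy₃

end RationalParameter

section Sextic

variable {b x y : ℝ}

/-- The common denominator of `x` and `y'` as functions of the rational parameter `t` of the sextic,
which is normalized so that the poles are at `±i` and `∞`. -/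
noncomputable def sexticDenom : ℝ[X] := 1 + X ^ 2

/-- The numerator of `x = sexticAbscissaNum b / sexticDenom` on the sextic. -/
noncomputable def sexticAbscissaNum (b : ℝ) : ℝ[X] := 1 + C b * (3 * X - X ^ 3)

/-- The numerator of `y = sexticOrdinateNum b / sexticDenom ^ 2` on the sextic. -/
noncomputable def sexticOrdinateNum (b : ℝ) : ℝ[X] :=
  X ^ 3 - C (b / 4) * (3 * X - X ^ 3) ^ 2

/-- The numerator of `y' = sexticSlopeNum / sexticDenom` on the sextic. -/
noncomputable def sexticSlopeNum : ℝ[X] := -C (1 / 2) * (3 * X - X ^ 3)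

lemma natDegree_sexticDenom_le : sexticDenom.natDegree ≤ 3 := by
  rw [sexticDenom]
  compute_degree!

lemma natDegree_sexticAbscissaNum_le (b : ℝ) : (sexticAbscissaNum b).natDegree ≤ 3 := by
  rw [sexticAbscissaNum]
  compute_degree!

lemma natDegree_sexticSlopeNum_le : sexticSlopeNum.natDegree ≤ 3 := by
  rw [sexticSlopeNum]
  compute_degree!

lemma eval_sexticDenom_ne_zero (t : ℝ) : sexticDenom.eval t ≠ 0 := by
  simp only [sexticDenom, eval_add, eval_one, eval_pow, eval_X]
  positivity

lemma apolarPairing_sexticAbscissaNum (b : ℝ) :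
    apolarPairing (sexticAbscissaNum b) sexticDenom = 0 := by
  simp only [apolarPairing, sexticAbscissaNum, sexticDenom, Function.iterate_succ_apply',
    Function.iterate_zero_apply, derivative_add, derivative_sub, derivative_mul, derivative_pow,
    derivative_one, derivative_ofNat, derivative_C, derivative_X, derivative_zero,
    derivative_natCast, map_natCast]
  push_cast
  ring

lemma apolarPairing_sexticSlopeNum : apolarPairing sexticSlopeNum sexticDenom = 0 := by
  simp only [apolarPairing, sexticSlopeNum, sexticDenom, Function.iterate_succ_apply',
    Function.iterate_zero_apply, derivative_add, derivative_sub, derivative_neg, derivative_mul,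
    derivative_pow, derivative_one, derivative_ofNat, derivative_C, derivative_X, derivative_zero,
    derivative_natCast, map_natCast]
  push_cast
  ring

/-- This is the contact condition `dy = y' dx` along the parametrization. -/
lemma eval_sexticOrdinateNum_contact (b t : ℝ) :
    (derivative (sexticOrdinateNum b) * sexticDenom
        - 2 * sexticOrdinateNum b * derivative sexticDenom).eval t =
      sexticSlopeNum.eval t * (wronskian sexticDenom (sexticAbscissaNum b)).eval t := by
  simp only [sexticOrdinateNum, sexticDenom, sexticSlopeNum, sexticAbscissaNum, wronskian,
    derivative_add, derivative_sub, derivative_mul, derivative_pow, derivative_one,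
    derivative_ofNat, derivative_C, derivative_X, eval_add, eval_sub, eval_neg, eval_mul, eval_pow,
    eval_one, eval_zero, eval_ofNat, eval_C, eval_X]
  push_cast
  ring

/-- The leading coefficient `D = 4by + x²` of the quadratic equation `Dt² - 3bt + (D - x) = 0`
satisfied by the parameter `t` of the point `(x, y)` of the sextic. -/
def sexticLeadCoeff (b x y : ℝ) : ℝ := 4 * b * y + x ^ 2

/-- The denominator of the parameter `t` on the sextic, which is obtained by eliminating `t²` from
`Dt² - 3bt + (D - x) = 0` and `3bt² + 4(x - D)t - 4y = 0`, where `D` is `sexticLeadCoeff`. -/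
def sexticParamDenom (b x y : ℝ) : ℝ :=
  9 * b ^ 2 + 4 * sexticLeadCoeff b x y * (x - sexticLeadCoeff b x y)

/-- The numerator of the parameter on the sextic, obtained as for `sexticParamDenom`. -/
def sexticParamNum (b x y : ℝ) : ℝ :=
  4 * sexticLeadCoeff b x y * y - 3 * b * (x - sexticLeadCoeff b x y)

/-- The rational parameter on the sextic, as a function of the point `(x, y)`; it is meaningful only
where `sexticParamDenom` does not vanish. -/
noncomputable def sexticParam (b x y : ℝ) : ℝ := sexticParamNum b x y / sexticParamDenom b x y

/-- A polynomial vanishing at the abscissae of the points of the sextic where `sexticLeadCoeff`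
(first factor) or `sexticParamDenom` (second factor) vanishes. -/
noncomputable def exceptionalPolynomial (b : ℝ) : ℝ[X] :=
  (X ^ 3 + C (27 * b ^ 2) * X - C (27 / 2 * b ^ 2)) *
    (X ^ 4 - X ^ 3 + C (18 * b ^ 2) * X ^ 2 - C (27 * b ^ 2) * X
      + C (27 / 4 * b ^ 2 - 27 * b ^ 4))

lemma monic_exceptionalPolynomial (b : ℝ) : (exceptionalPolynomial b).Monic :=
  Monic.mul (by monicity!) (by monicity!)

/-- The right-hand side is the resultant of the two quadratic equations for the parameter. -/
lemma sexticLeadCoeff_mul_Fsextic (b x y : ℝ) :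
    sexticLeadCoeff b x y * Fsextic b x y = sexticParamNum b x y ^ 2
      - sexticParamDenom b x y * (4 * (x - sexticLeadCoeff b x y) ^ 2 + 12 * b * y) := by
  simp only [Fsextic, sexticParamNum, sexticParamDenom, sexticLeadCoeff]
  ring

lemma Fsextic_eq_cubic_add_sexticLeadCoeff_mul (b x y : ℝ) :
    Fsextic b x y = 2 * (x ^ 3 + 27 * b ^ 2 * x - 27 / 2 * b ^ 2)
      + sexticLeadCoeff b x y * (16 * y ^ 2 + 16 * sexticLeadCoeff b x y ^ 2
        + (18 - 48 * x) * sexticLeadCoeff b x y + 30 * x ^ 2 - 18 * x - 27 * b ^ 2) := by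
  simp only [Fsextic, sexticLeadCoeff]
  ring

lemma sexticLeadCoeff_ne_zero (hF : Fsextic b x y = 0) (hx : (exceptionalPolynomial b).eval x ≠ 0) :
    sexticLeadCoeff b x y ≠ 0 := by
  intro hD
  rw [Fsextic_eq_cubic_add_sexticLeadCoeff_mul, hD] at hF
  refine hx ?_
  rw [exceptionalPolynomial, eval_mul]
  refine mul_eq_zero_of_left ?_ _
  simp only [eval_add, eval_sub, eval_mul, eval_pow, eval_X, eval_C]
  linear_combination hF / 2

lemma sexticParamDenom_ne_zero (hF : Fsextic b x y = 0)
    (hx : (exceptionalPolynomial b).eval x ≠ 0) : sexticParamDenom b x y ≠ 0 := by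
  intro hK
  have hN : sexticParamNum b x y = 0 := by
    have h := sexticLeadCoeff_mul_Fsextic b x y
    rw [hF, hK, mul_zero, zero_mul, sub_zero] at h
    exact pow_eq_zero_iff two_ne_zero |>.mp h.symm
  have hD := sexticLeadCoeff_ne_zero hF hx
  rw [sexticParamDenom] at hK
  rw [sexticParamNum] at hN
  have hDy : 4 * b * y = sexticLeadCoeff b x y - x ^ 2 := by rw [sexticLeadCoeff]; ring
  generalize sexticLeadCoeff b x y = D at *
  have hquad : 3 * (D - x ^ 2) + 4 * (x - D) ^ 2 = 0 := by
    refine (mul_eq_zero.mp ?_).resolve_left hD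
    linear_combination 3 * b * hN + (x - D) * hK - 3 * D * hDy
  -- The terms `D²` of `hK` and `hquad` cancel in the sum, leaving an equation linear in `D`.
  have hlin : (4 * x - 3) * (D - x) = 9 * b ^ 2 + 3 * x - 3 * x ^ 2 := by
    linear_combination -hK - hquad
  refine hx ?_
  rw [exceptionalPolynomial, eval_mul]
  refine mul_eq_zero_of_right _ ?_
  simp only [eval_add, eval_sub, eval_mul, eval_pow, eval_X, eval_C]
  linear_combination (4 * x - 3) ^ 2 / 12 * hK
    + ((4 * x - 3) * (D - x) + (9 * b ^ 2 + 3 * x - 3 * x ^ 2) + x * (4 * x - 3)) / 3 * hlin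

lemma sexticParam_quadratics (hF : Fsextic b x y = 0) (hK : sexticParamDenom b x y ≠ 0) :
    3 * b * sexticParam b x y ^ 2 + 4 * (x - sexticLeadCoeff b x y) * sexticParam b x y = 4 * y ∧
      sexticLeadCoeff b x y * (1 + sexticParam b x y ^ 2) = 3 * b * sexticParam b x y + x := by
  have hres := sexticLeadCoeff_mul_Fsextic b x y
  rw [hF, mul_zero] at hres
  have ht : sexticParam b x y * sexticParamDenom b x y = sexticParamNum b x y :=
    div_mul_cancel₀ _ hK
  rw [← ht] at hres
  rw [sexticParamNum] at ht
  generalize sexticParam b x y = t at *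
  generalize hK' : sexticParamDenom b x y = K at *
  rw [sexticParamDenom] at hK'
  generalize sexticLeadCoeff b x y = D at *
  have hKt : K * t ^ 2 = 4 * (x - D) ^ 2 + 12 * b * y := by
    apply mul_left_cancel₀ hK
    linear_combination -hres
  constructor <;> apply mul_left_cancel₀ hK
  · linear_combination 3 * b * hKt + 4 * (x - D) * ht + 4 * y * hK'
  · linear_combination D * hKt - 3 * b * ht + (x - D) * hK'

lemma mul_eval_sexticDenom (hF : Fsextic b x y = 0) (hD : sexticLeadCoeff b x y ≠ 0)
    (hK : sexticParamDenom b x y ≠ 0) :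
    x * sexticDenom.eval (sexticParam b x y) = (sexticAbscissaNum b).eval (sexticParam b x y) := by
  obtain ⟨hquad₁, hquad₂⟩ := sexticParam_quadratics hF hK
  have hDy : sexticLeadCoeff b x y = 4 * b * y + x ^ 2 := rfl
  simp only [sexticDenom, sexticAbscissaNum, eval_add, eval_sub, eval_mul, eval_pow, eval_one,
    eval_C, eval_X, eval_ofNat]
  apply mul_left_cancel₀ hD
  linear_combination (x + b * sexticParam b x y) * hquad₂ + b * hquad₁ - hDy

lemma eq_eval_sexticOrdinateNum_div (hF : Fsextic b x y = 0) (hD : sexticLeadCoeff b x y ≠ 0)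
    (hK : sexticParamDenom b x y ≠ 0) :
    y = (sexticOrdinateNum b).eval (sexticParam b x y)
      / sexticDenom.eval (sexticParam b x y) ^ 2 := by
  rw [eq_div_iff (pow_ne_zero 2 (eval_sexticDenom_ne_zero _))]
  obtain ⟨hquad₁, hquad₂⟩ := sexticParam_quadratics hF hK
  have hx := mul_eval_sexticDenom hF hD hK
  generalize sexticParam b x y = t at *
  simp only [sexticDenom, sexticAbscissaNum, sexticOrdinateNum, eval_add, eval_sub, eval_mul,
    eval_pow, eval_one, eval_C, eval_X, eval_ofNat] at hx ⊢
  linear_combination -(1 + t ^ 2) ^ 2 / 4 * hquad₁ + t ^ 3 * hx - t * (1 + t ^ 2) * hquad₂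

lemma differentiableOn_sexticParam {s : Set ℝ} {f : ℝ → ℝ} (hf : DifferentiableOn ℝ f s)
    (hK : ∀ z ∈ s, sexticParamDenom b z (f z) ≠ 0) :
    DifferentiableOn ℝ (fun z ↦ sexticParam b z (f z)) s := by
  unfold sexticParam
  refine DifferentiableOn.div ?_ ?_ hK <;>
    simp only [sexticParamNum, sexticParamDenom, sexticLeadCoeff] <;> fun_prop

theorem Eode_eq_zero_of_Fsextic_eq_zero_of_ne_zero {s : Set ℝ} {f : ℝ → ℝ} (hs : IsOpen s)
    (hf : DifferentiableOn ℝ f s) (hF : ∀ z ∈ s, Fsextic b z (f z) = 0)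
    (hD : ∀ z ∈ s, sexticLeadCoeff b z (f z) ≠ 0) (hK : ∀ z ∈ s, sexticParamDenom b z (f z) ≠ 0) :
    ∀ z ∈ s, Eode f s z = 0 := by
  have ht := differentiableOn_sexticParam hf hK
  have hB (z : ℝ) (_ : z ∈ s) := eval_sexticDenom_ne_zero (sexticParam b z (f z))
  have hx (z : ℝ) (hz : z ∈ s) := mul_eval_sexticDenom (hF z hz) (hD z hz) (hK z hz)
  refine Eode_eq_zero_of_legendrian (natDegree_sexticAbscissaNum_le b) natDegree_sexticDenom_le
    natDegree_sexticSlopeNum_le (apolarPairing_sexticAbscissaNum b) apolarPairing_sexticSlopeNum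
    hs ht hB hx fun z hz ↦ ?_
  obtain ⟨hW, ht'⟩ := eval_wronskian_ne_zero_and_hasDerivAt hs ht hB hx hz
  have hquot := hasDerivAt_eval_div_eval_pow (t := fun w ↦ sexticParam b w (f w))
    (sexticOrdinateNum b) 2 (hB z hz) ht'
  refine (hquot.congr_of_eventuallyEq ?_).congr_deriv ?_
  · exact Filter.eventually_of_mem (hs.mem_nhds hz) fun w hw ↦
      eq_eval_sexticOrdinateNum_div (hF w hw) (hD w hw) (hK w hw)
  · have hBz := hB z hz
    rw [Nat.cast_ofNat, eval_sexticOrdinateNum_contact]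
    field_simp

end Sextic

theorem stmt17_general (b : ℝ) {s : Set ℝ} (hs : IsOpen s) {y : ℝ → ℝ} (hy : ContDiffOn ℝ 7 y s)
    (hcurve : ∀ x ∈ s, Fsextic b x (y x) = 0) : ∀ x ∈ s, Eode y s x = 0 := by
  have hS : {x | (exceptionalPolynomial b).IsRoot x}.Finite :=
    finite_setOfPred_isRoot (monic_exceptionalPolynomial b).ne_zero
  refine Eode_eq_zero_of_finite_diff hs hy hS fun x hx ↦ ?_
  have hU : IsOpen (s \ {x | (exceptionalPolynomial b).IsRoot x}) := hs.sdiff hS.isClosed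
  rw [Eode_eq_of_isOpen hs hU hx.1 hx]
  exact Eode_eq_zero_of_Fsextic_eq_zero_of_ne_zero hU
    ((hy.differentiableOn (by norm_num)).mono Set.sdiff_subset)
    (fun z hz ↦ hcurve z hz.1)
    (fun z hz ↦ sexticLeadCoeff_ne_zero (hcurve z hz.1) hz.2)
    (fun z hz ↦ sexticParamDenom_ne_zero (hcurve z hz.1) hz.2) x hx

theorem stmt17 (a c : ℝ) (hac : a < c) (y : ℝ → ℝ)
    (hy : ContDiffOn ℝ (⊤ : ℕ∞) y (Set.Ioo a c))
    (hcurve : ∀ x ∈ Set.Ioo a c, Fsextic (1/2) x (y x) = 0)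
    (hFy : ∀ x ∈ Set.Ioo a c, deriv (fun w => Fsextic (1/2) x w) (y x) ≠ 0) :
    ∀ x ∈ Set.Ioo a c, Eode y (Set.Ioo a c) x = 0 :=
  stmt17_general (1 / 2) isOpen_Ioo (hy.of_le (WithTop.coe_le_coe.mpr le_top)) hcurve
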